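/- arXiv:2504.18974 — 2 statements merged into one kernel-verified Lean document; each statement's English description precedes it below -/
import Mathlib

section
/- Let d, m, k be natural numbers with k ≤ d. Fix a k-element subset T of Fin (d+m) (the slots in which the dishonest server hides model parameters), and let S be an m-element subset of Fin (d+m) chosen uniformly at random (the provider's secret check slots). Then the probability that S is disjoint from T (i.e., the attack escapes detection) equals (d.choose k) / ((d+m).choose k). -/
/-! Both sides are ratios of counts. The `m`-subsets of the `d + m` slots that miss `T` are the
`m`-subsets of `Tᶜ`, so the probability is `(d + m - k).choose m / (d + m).choose m`. Double
counting the pairs `K ⊆ D` with `|K| = k`, `|D| = d` inside `d + m` slots (`Nat.choose_mul`),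
together with the symmetry of binomial coefficients, turns this into
`d.choose k / (d + m).choose k`. -/

/-- The uniform distribution on all `m`-element subsets of `Fin (d + m)`:
the provider's secret check slots. -/
noncomputable def uniformCheckSet (d m : ℕ) : PMF (Finset (Fin (d + m))) :=
  PMF.uniformOfFinset (Finset.powersetCard m (Finset.univ : Finset (Fin (d + m))))
    (Finset.powersetCard_nonempty.mpr (by simp))

/-- The decidability instance is implicit so that rewriting unifies it with the classical one
occurring in `PMF.toOuterMeasure_uniformOfFinset_apply`. -/
theorem card_powersetCard_filter_disjoint {α : Type*} [Fintype α] [DecidableEq α]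
    (m : ℕ) (T : Finset α) (p : Finset α → Prop) {_ : DecidablePred p}
    (hp : ∀ S, p S ↔ Disjoint S T) :
    ((Finset.powersetCard m Finset.univ).filter p).card
      = (Fintype.card α - T.card).choose m := by
  have h : (Finset.powersetCard m Finset.univ).filter p = Finset.powersetCard m Tᶜ := by
    ext S
    simp [Finset.mem_powersetCard, hp, Finset.subset_compl_iff_disjoint_right, and_comm]
  rw [h, Finset.card_powersetCard, Finset.card_compl]

theorem choose_evasion_identity (d m k : ℕ) (hk : k ≤ d) :
    (d + m - k).choose m * (d + m).choose k = d.choose k * (d + m).choose m := by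
  have h := Nat.choose_mul (n := d + m) hk
  have h1 : (d + m).choose d = (d + m).choose m := Nat.choose_symm_of_eq_add rfl
  have h2 : (d + m - k).choose (d - k) = (d + m - k).choose m :=
    Nat.choose_symm_of_eq_add (by omega)
  rw [h1, h2] at h
  linarith

/-- If the dishonest server hides model parameters in a fixed `k`-element set `T`
of the `d + m` slots (with `k ≤ d`), the probability that a uniformly random
`m`-element check set `S` is disjoint from `T` equals
`(d.choose k) / ((d + m).choose k)`. -/
theorem silver_platter_evasion_prob (d m k : ℕ) (hk : k ≤ d)
    (T : Finset (Fin (d + m))) (hT : T.card = k) :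
    (((uniformCheckSet d m).toOuterMeasure {S | Disjoint S T}).toReal)
      = (d.choose k : ℝ) / ((d + m).choose k : ℝ) := by
  classical
  rw [uniformCheckSet, PMF.toOuterMeasure_uniformOfFinset_apply,
    card_powersetCard_filter_disjoint m T (· ∈ {S | Disjoint S T}) (fun _ => Iff.rfl),
    Finset.card_powersetCard,
    Finset.card_univ, Fintype.card_fin, hT, ENNReal.toReal_div, ENNReal.toReal_natCast,
    ENNReal.toReal_natCast]
  have h1 : ((d + m).choose m : ℝ) ≠ 0 :=
    Nat.cast_ne_zero.mpr (Nat.choose_pos (by omega)).ne'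
  have h2 : ((d + m).choose k : ℝ) ≠ 0 :=
    Nat.cast_ne_zero.mpr (Nat.choose_pos (by omega)).ne'
  rw [div_eq_div_iff h1 h2]
  exact_mod_cast choose_evasion_identity d m k hk
end

section
/- For all natural numbers d, m, k with 2 ≤ k, k ≤ d, and m ≥ 1, the strict inequality (d.choose k) / ((d+m).choose k) < ((d : ℝ) / (d + m))^k holds. Hence hiding k ≥ 2 parameters in a single ciphertext has strictly smaller success probability than hiding one parameter in each of k independent ciphertexts. -/
/-!
Passing from `k` to `k + 1` multiplies `d.choose k / (d + m).choose k` by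
`(d - k) / (d + m - k)`, which is strictly less than `d / (d + m)` when `k, m ≥ 1`.
At `k = 1` the two sides agree, so the inequality is weak there and strict from `k = 2` on.
The induction is carried out in `ℕ` after clearing denominators.
-/

/-- One induction step: a weak inequality at `k ≥ 1` becomes strict at `k + 1`. -/
lemma choose_mul_pow_step (d m k : ℕ) (hk1 : 1 ≤ k) (hk : k + 1 ≤ d) (hm : 1 ≤ m)
    (h : d.choose k * (d + m) ^ k ≤ d ^ k * (d + m).choose k) :
    d.choose (k + 1) * (d + m) ^ (k + 1) < d ^ (k + 1) * (d + m).choose (k + 1) := by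
  have hfac : (d - k) * (d + m) < d * (d + m - k) := by
    obtain ⟨e, rfl⟩ := Nat.exists_eq_add_of_le (show k ≤ d by omega)
    have h1 : k + e - k = e := by omega
    have h2 : k + e + m - k = e + m := by omega
    rw [h1, h2]
    nlinarith [Nat.mul_pos hk1 hm]
  have hpos : 0 < d ^ k * (d + m).choose k :=
    Nat.mul_pos (Nat.pow_pos (by omega)) (Nat.choose_pos (by omega))
  refine lt_of_mul_lt_mul_right (a := k + 1) ?_ (Nat.zero_le _)
  calc d.choose (k + 1) * (d + m) ^ (k + 1) * (k + 1)
      = (d.choose (k + 1) * (k + 1)) * (d + m) ^ (k + 1) := by ring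
    _ = (d.choose k * (d + m) ^ k) * ((d - k) * (d + m)) := by
        rw [Nat.choose_succ_right_eq]; ring
    _ ≤ (d ^ k * (d + m).choose k) * ((d - k) * (d + m)) := Nat.mul_le_mul_right _ h
    _ < (d ^ k * (d + m).choose k) * (d * (d + m - k)) := Nat.mul_lt_mul_of_pos_left hfac hpos
    _ = d ^ (k + 1) * ((d + m).choose k * (d + m - k)) := by ring
    _ = d ^ (k + 1) * (d + m).choose (k + 1) * (k + 1) := by
        rw [← Nat.choose_succ_right_eq]; ring

lemma choose_mul_pow_le (d m k : ℕ) (hk1 : 1 ≤ k) (hk : k ≤ d) (hm : 1 ≤ m) :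
    d.choose k * (d + m) ^ k ≤ d ^ k * (d + m).choose k := by
  induction k, hk1 using Nat.le_induction with
  | base => simp
  | succ k hk1 ih => exact (choose_mul_pow_step d m k hk1 hk hm (ih (by omega))).le

/-- For all naturals `d, m, k` with `2 ≤ k`, `k ≤ d` and `m ≥ 1`,
`(d.choose k) / ((d + m).choose k) < (d / (d + m))^k`: hiding `k ≥ 2` parameters
in a single ciphertext has strictly smaller success probability than hiding one
parameter in each of `k` independent ciphertexts. -/
theorem choose_ratio_lt_pow (d m k : ℕ) (hk2 : 2 ≤ k) (hk : k ≤ d) (hm : 1 ≤ m) :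
    (d.choose k : ℝ) / ((d + m).choose k : ℝ) < ((d : ℝ) / ((d : ℝ) + (m : ℝ))) ^ k := by
  obtain ⟨j, rfl⟩ : ∃ j, k = j + 1 := ⟨k - 1, by omega⟩
  have h := choose_mul_pow_step d m j (by omega) hk hm
    (choose_mul_pow_le d m j (by omega) (by omega) hm)
  have hc : (0 : ℝ) < ((d + m).choose (j + 1) : ℝ) := by
    exact_mod_cast Nat.choose_pos (by omega)
  have hs : (0 : ℝ) < (d : ℝ) + (m : ℝ) := by
    exact_mod_cast (show 0 < d + m by omega)
  rw [div_pow, div_lt_div_iff₀ hc (pow_pos hs _)]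
  exact_mod_cast h
end
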